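/- Product formula θ_{1,1}(τ) = 2 q^{1/4} (q⁴;q⁴)_∞² / (q²;q²)_∞, where θ_{1,1}(τ) = Σ_{n∈ℤ} q^{(2n+1)²/4} and q = e^{2πiτ}. -/

import Mathlib

open Complex

/-- The q-Pochhammer symbol `(a;q)_∞ = ∏_{n ≥ 1} (1 - a q^{n-1})`. -/
noncomputable def qPoch (a q : ℂ) : ℂ := ∏' n : ℕ, (1 - a * q ^ n)

/-- The Jacobi theta function `ϑ(z;τ) = ∑_{n ∈ 1/2 + ℤ} e^{πi n² τ + 2πi n (z + 1/2)}`. -/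
noncomputable def jTheta (z τ : ℂ) : ℂ :=
  ∑' n : ℤ, Complex.exp ((Real.pi : ℂ) * I * ((n : ℂ) + 1/2) ^ 2 * τ +
    2 * (Real.pi : ℂ) * I * ((n : ℂ) + 1/2) * (z + 1/2))

/-- `ϑ_{m,a}(z;τ) = ∑_{n ∈ ℤ} q^{(2mn+a)²/(4m)} ζ^{2mn+a}` with `q = e^{2πiτ}`, `ζ = e^{2πiz}`,
fractional powers interpreted via `q^x = e^{2πiτx}`, `ζ^x = e^{2πizx}`. -/
noncomputable def thetaMA (m a : ℝ) (z τ : ℂ) : ℂ :=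
  ∑' n : ℤ, Complex.exp (2 * (Real.pi : ℂ) * I * τ * ((2 * m * n + a) ^ 2 / (4 * m)) +
    2 * (Real.pi : ℂ) * I * z * (2 * m * n + a))

/-- The theta constant `θ_{m,a}(τ) = ϑ_{m,a}(0;τ)`. -/
noncomputable def thetaC (m a : ℝ) (τ : ℂ) : ℂ := thetaMA m a 0 τ

/-!
Split at the middle, the product `∏_{i < 2n} (1 + y xⁱ)` with `y = z x^{1-n}` becomes, up to a
monomial, `(-zx; x)_n (-z⁻¹; x)_n`, and the `q`-binomial theorem expands it in powers of `z`.
As `n → ∞` each central Gaussian coefficient tends to `1 / (x; x)_∞`, boundedly, so dominated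
convergence yields Jacobi's triple product. At `z = 1` and `x = q²` its sum is `q^{-1/4} θ_{1,1}`,
and its product collapses by `(-1; x)_∞ = 2 (-x; x)_∞` and `(x; x)_∞ (-x; x)_∞ = (x²; x²)_∞`.
-/

open Filter Topology Finset

/-- The finite `q`-Pochhammer symbol `(a;q)_n = ∏_{i < n} (1 - a qⁱ)`, the partial product of
`qPoch a q`. -/
def qPochFin {R : Type*} [CommRing R] (a q : R) (n : ℕ) : R := ∏ i ∈ range n, (1 - a * q ^ i)

/-- The Gaussian binomial coefficient at `q`. It is defined by the `q`-Pascal recurrence rather than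
as a quotient of `q`-Pochhammer symbols, so that it makes sense in every semiring and vanishes for
`n < k`. -/
def qBinom {R : Type*} [Semiring R] (q : R) : ℕ → ℕ → R
  | _, 0 => 1
  | 0, _ + 1 => 0
  | n + 1, k + 1 => qBinom q n k + q ^ (k + 1) * qBinom q n (k + 1)

section QBinom

variable {R : Type*} [Semiring R]

lemma qBinom_zero_right (q : R) (n : ℕ) : qBinom q n 0 = 1 := by
  cases n <;> rfl

lemma qBinom_succ_succ (q : R) (n k : ℕ) :
    qBinom q (n + 1) (k + 1) = qBinom q n k + q ^ (k + 1) * qBinom q n (k + 1) := rfl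

lemma qBinom_eq_zero_of_lt (q : R) {n k : ℕ} (h : n < k) :
    qBinom q n k = 0 := by
  induction n generalizing k with
  | zero =>
    obtain ⟨k, rfl⟩ := Nat.exists_eq_add_one.mpr h
    rfl
  | succ n ih =>
    obtain ⟨k, rfl⟩ := Nat.exists_eq_add_one.mpr (Nat.zero_lt_of_lt h)
    rw [qBinom_succ_succ, ih (by lia), ih (by lia), mul_zero, add_zero]

lemma qBinom_self (q : R) (n : ℕ) : qBinom q n n = 1 := by
  induction n with
  | zero => rfl
  | succ n ih =>
    rw [qBinom_succ_succ, ih, qBinom_eq_zero_of_lt q n.lt_succ_self, mul_zero, add_zero]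

end QBinom

theorem prod_one_add_mul_pow_eq_sum_qBinom {R : Type*} [CommSemiring R] (q y : R) (n : ℕ) :
    ∏ i ∈ range n, (1 + y * q ^ i) =
      ∑ k ∈ range (n + 1), qBinom q n k * (q ^ k.choose 2 * y ^ k) := by
  induction n generalizing y with
  | zero => simp [qBinom_zero_right]
  | succ n ih =>
    have shift : ∏ i ∈ range n, (1 + y * q ^ (i + 1)) = ∏ i ∈ range n, (1 + y * q * q ^ i) :=
      prod_congr rfl fun i _ => by ring
    have peel : ∑ k ∈ range (n + 1), qBinom q n k * (q ^ k.choose 2 * (y * q) ^ k) =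
        ∑ k ∈ range (n + 1),
          qBinom q n (k + 1) * (q ^ (k + 1).choose 2 * (y * q) ^ (k + 1)) + 1 := by
      rw [sum_range_succ', sum_range_succ _ n, qBinom_eq_zero_of_lt q n.lt_succ_self]
      simp [qBinom_zero_right]
    have pascal (k : ℕ) : qBinom q (n + 1) (k + 1) * (q ^ (k + 1).choose 2 * y ^ (k + 1)) =
        qBinom q n (k + 1) * (q ^ (k + 1).choose 2 * (y * q) ^ (k + 1)) +
          y * (qBinom q n k * (q ^ k.choose 2 * (y * q) ^ k)) := by
      rw [qBinom_succ_succ, Nat.choose_succ_succ' k 1, Nat.choose_one_right]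
      ring
    rw [prod_range_succ', shift, ih, sum_range_succ' _ (n + 1)]
    simp_rw [pascal]
    rw [sum_add_distrib, ← mul_sum, pow_zero, mul_one, mul_add, mul_one]
    nth_rw 1 [peel]
    simp only [qBinom_zero_right, Nat.choose_zero_succ, pow_zero, mul_one]
    ring

section QPochFin

variable {R : Type*} [CommRing R]

lemma qPochFin_zero (a q : R) : qPochFin a q 0 = 1 := prod_range_zero _

lemma qPochFin_succ (a q : R) (n : ℕ) :
    qPochFin a q (n + 1) = qPochFin a q n * (1 - a * q ^ n) :=
  prod_range_succ _ n

lemma qBinom_add_mul_qPochFin_mul_qPochFin (q : R) : ∀ m k : ℕ,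
    qBinom q (m + k) k * (qPochFin q q m * qPochFin q q k) = qPochFin q q (m + k)
  | m, 0 => by simp [qBinom_zero_right, qPochFin_zero]
  | 0, k + 1 => by simp [qBinom_self, qPochFin_zero]
  | m + 1, k + 1 => by
    have h₁ := qBinom_add_mul_qPochFin_mul_qPochFin q (m + 1) k
    have h₂ := qBinom_add_mul_qPochFin_mul_qPochFin q m (k + 1)
    rw [show m + (k + 1) = m + 1 + k by ring] at h₂
    rw [← add_assoc, qBinom_succ_succ, qPochFin_succ q q (m + 1 + k)]
    rw [qPochFin_succ q q m] at h₁ ⊢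
    rw [qPochFin_succ q q k] at h₂ ⊢
    linear_combination (1 - q ^ (k + 1)) * h₁ + q ^ (k + 1) * (1 - q ^ (m + 1)) * h₂

end QPochFin

section FiniteTripleProduct

lemma two_mul_cast_choose_two {R : Type*} [CommRing R] (n : ℕ) :
    2 * (n.choose 2 : R) = n * (n - 1) := by
  induction n with
  | zero => simp
  | succ n ih =>
    rw [Nat.choose_succ_succ' n 1, Nat.choose_one_right]
    push_cast
    linear_combination ih

variable {K : Type*} [Field K]

lemma prod_range_two_mul_eq_qPochFin_mul_qPochFin {x z : K} (hx : x ≠ 0) (hz : z ≠ 0) (n : ℕ) :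
    ∏ i ∈ range (2 * n), (1 + z * x / x ^ n * x ^ i) =
      z ^ n / x ^ n.choose 2 * (qPochFin (-(z * x)) x n * qPochFin (-z⁻¹) x n) := by
  have lower : ∏ i ∈ range n, (1 + z * x / x ^ n * x ^ i) =
      z ^ n / x ^ n.choose 2 * qPochFin (-z⁻¹) x n := by
    have monomial : z ^ n / x ^ n.choose 2 = ∏ i ∈ range n, z / x ^ i := by
      rw [prod_div_distrib, prod_const, card_range, prod_pow_eq_pow_sum, sum_range_id,
        Nat.choose_two_right]
    rw [← prod_range_reflect, monomial, qPochFin, ← prod_mul_distrib]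
    refine prod_congr rfl fun i hi => ?_
    have hn : x ^ n = x ^ (n - 1 - i) * x ^ i * x := by
      rw [← pow_add, ← pow_succ]
      congr 1
      have := mem_range.mp hi
      lia
    rw [hn]
    field_simp
    ring
  have upper : ∏ i ∈ range n, (1 + z * x / x ^ n * x ^ (n + i)) = qPochFin (-(z * x)) x n :=
    prod_congr rfl fun i _ => by
      rw [pow_add]
      field_simp
      ring
  rw [two_mul, prod_range_add, lower, upper]
  ring

lemma pow_choose_two_mul_div_pow {x z : K} (hx : x ≠ 0) (hz : z ≠ 0) (n : ℕ) (k : ℤ)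
    (hk : 0 ≤ n + k) :
    x ^ (n + k).toNat.choose 2 * (z * x / x ^ n) ^ (n + k).toNat =
      z ^ n / x ^ n.choose 2 * (x ^ (k * (k + 1) / 2) * z ^ k) := by
  obtain ⟨j, rfl⟩ : ∃ j : ℕ, k = j - n := ⟨(n + k).toNat, by lia⟩
  have hexp : (j.choose 2 : ℤ) + (j - n * j) =
      -(n.choose 2) + (j - n : ℤ) * (j - n + 1) / 2 := by
    have h := Int.two_mul_ediv_two_of_even (Int.even_mul_succ_self (j - n : ℤ))
    have hj := two_mul_cast_choose_two (R := ℤ) j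
    have hn := two_mul_cast_choose_two (R := ℤ) n
    refine mul_left_cancel₀ (two_ne_zero (α := ℤ)) ?_
    linear_combination hj + hn - h
  have hpow : x ^ j.choose 2 * (x ^ j / (x ^ n) ^ j) =
      (x ^ n.choose 2)⁻¹ * x ^ ((j - n : ℤ) * (j - n + 1) / 2) := by
    have h := congrArg (x ^ ·) hexp
    simp only [zpow_add₀ hx, zpow_sub₀ hx, zpow_neg, zpow_natCast] at h
    rwa [zpow_mul, zpow_natCast, zpow_natCast] at h
  rw [show ((n : ℤ) + (j - n)).toNat = j by lia, div_pow, mul_pow, zpow_sub₀ hz, zpow_natCast,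
    zpow_natCast]
  field_simp at hpow ⊢
  linear_combination hpow

lemma sum_range_two_mul_add_one_eq_sum_Icc {M : Type*} [AddCommMonoid M] (f : ℕ → M) (n : ℕ) :
    ∑ j ∈ range (2 * n + 1), f j = ∑ k ∈ Icc (-n : ℤ) n, f (n + k).toNat :=
  sum_nbij' (fun j => j - n) (fun k => (n + k).toNat) (by simp; lia) (by simp; lia)
    (by simp) (by simp; lia) (by simp)

theorem qPochFin_mul_qPochFin_eq_sum_qBinom {x z : K} (hx : x ≠ 0) (hz : z ≠ 0) (n : ℕ) :
    qPochFin (-(z * x)) x n * qPochFin (-z⁻¹) x n =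
      ∑ k ∈ Icc (-n : ℤ) n, qBinom x (2 * n) (n + k).toNat * (x ^ (k * (k + 1) / 2) * z ^ k) := by
  have hc : z ^ n / x ^ n.choose 2 ≠ 0 := div_ne_zero (pow_ne_zero _ hz) (pow_ne_zero _ hx)
  refine mul_left_cancel₀ hc ?_
  rw [← prod_range_two_mul_eq_qPochFin_mul_qPochFin hx hz, prod_one_add_mul_pow_eq_sum_qBinom,
    sum_range_two_mul_add_one_eq_sum_Icc, mul_sum]
  refine sum_congr rfl fun k hk => ?_
  have := mem_Icc.mp hk
  rw [pow_choose_two_mul_div_pow hx hz n k (by lia), mul_left_comm]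

end FiniteTripleProduct

section Summability

variable {𝕜 : Type*} [NormedField 𝕜] [CompleteSpace 𝕜]

lemma summable_pow_choose_two_mul_pow {x : 𝕜} (hx : ‖x‖ < 1) (z : 𝕜) :
    Summable fun m : ℕ => x ^ m.choose 2 * z ^ m := by
  have ratio : Tendsto (fun m : ℕ => ‖x ^ m * z‖) atTop (𝓝 0) := by
    simpa using ((tendsto_pow_atTop_nhds_zero_of_norm_lt_one hx).mul_const z).norm
  refine summable_of_ratio_norm_eventually_le (r := 1 / 2) (by norm_num) ?_
  filter_upwards [ratio.eventually_le_const one_half_pos] with m hm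
  calc ‖x ^ (m + 1).choose 2 * z ^ (m + 1)‖
      = ‖x ^ m * z‖ * ‖x ^ m.choose 2 * z ^ m‖ := by
        rw [← norm_mul, Nat.choose_succ_succ' m 1, Nat.choose_one_right]
        ring_nf
    _ ≤ 1 / 2 * ‖x ^ m.choose 2 * z ^ m‖ := by gcongr

lemma summable_zpow_triangular_mul_zpow {x : 𝕜} (hx : ‖x‖ < 1) (z : 𝕜) :
    Summable fun k : ℤ => x ^ (k * (k + 1) / 2) * z ^ k := by
  have htri (m : ℕ) : (m * (m + 1) / 2 : ℤ) = (m.choose 2 + m : ℕ) := by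
    refine Int.ediv_eq_of_eq_mul_right two_ne_zero ?_
    push_cast
    linear_combination -two_mul_cast_choose_two (R := ℤ) m
  have htri_neg (m : ℕ) : (-m * (-m + 1) / 2 : ℤ) = m.choose 2 :=
    Int.ediv_eq_of_eq_mul_right two_ne_zero
      (by linear_combination -two_mul_cast_choose_two (R := ℤ) m)
  refine .of_nat_of_neg ?_ ?_
  · refine (summable_pow_choose_two_mul_pow hx (x * z)).congr fun m => ?_
    rw [htri, zpow_natCast, zpow_natCast, pow_add, mul_pow, mul_assoc]
  · refine (summable_pow_choose_two_mul_pow hx z⁻¹).congr fun m => ?_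
    rw [htri_neg, zpow_natCast, zpow_neg, zpow_natCast, inv_pow]

end Summability

section InfiniteProducts

variable {𝕜 : Type*} [NormedField 𝕜] {x : 𝕜}

lemma summable_norm_mul_pow (a : 𝕜) (hx : ‖x‖ < 1) : Summable fun n : ℕ => ‖a * x ^ n‖ := by
  simpa using (summable_geometric_of_lt_one (norm_nonneg x) hx).mul_left ‖a‖

lemma multipliable_one_sub_mul_pow [CompleteSpace 𝕜] (a : 𝕜) (hx : ‖x‖ < 1) :
    Multipliable fun n : ℕ => 1 - a * x ^ n := by
  simpa [← sub_eq_add_neg] using multipliable_one_add_of_summable (summable_norm_mul_pow (-a) hx)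

lemma one_sub_mul_pow_ne_zero {a : 𝕜} (ha : ‖a‖ < 1) (hx : ‖x‖ < 1) (n : ℕ) :
    1 - a * x ^ n ≠ 0 := by
  refine sub_ne_zero.mpr fun h => ?_
  have : ‖a * x ^ n‖ < 1 := by
    rw [norm_mul, norm_pow]
    exact mul_lt_one_of_nonneg_of_lt_one_left (norm_nonneg a) ha
      (pow_le_one₀ (norm_nonneg x) hx.le)
  simp [← h] at this

lemma qPochFin_ne_zero {a : 𝕜} (ha : ‖a‖ < 1) (hx : ‖x‖ < 1) (n : ℕ) : qPochFin a x n ≠ 0 :=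
  prod_ne_zero_iff.mpr fun i _ => one_sub_mul_pow_ne_zero ha hx i

lemma qBinom_add_eq_div (hx : ‖x‖ < 1) (m k : ℕ) :
    qBinom x (m + k) k = qPochFin x x (m + k) / (qPochFin x x m * qPochFin x x k) :=
  eq_div_of_mul_eq (mul_ne_zero (qPochFin_ne_zero hx hx m) (qPochFin_ne_zero hx hx k))
    (qBinom_add_mul_qPochFin_mul_qPochFin x m k)

end InfiniteProducts

section QPoch

variable {x : ℂ}

lemma tendsto_qPochFin (a : ℂ) (hx : ‖x‖ < 1) :
    Tendsto (qPochFin a x) atTop (𝓝 (qPoch a x)) :=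
  (multipliable_one_sub_mul_pow a hx).tendsto_prod_tprod_nat

lemma qPoch_ne_zero {a : ℂ} (ha : ‖a‖ < 1) (hx : ‖x‖ < 1) : qPoch a x ≠ 0 := by
  simp only [qPoch, sub_eq_add_neg]
  refine tprod_one_add_ne_zero_of_summable (fun n => ?_) ?_
  · simpa only [sub_eq_add_neg] using one_sub_mul_pow_ne_zero ha hx n
  · simpa only [norm_neg] using summable_norm_mul_pow a hx

lemma qPoch_eq_one_sub_mul (a : ℂ) (hx : ‖x‖ < 1) : qPoch a x = (1 - a) * qPoch (a * x) x := by
  have hshift (n : ℕ) : 1 - a * x * x ^ n = 1 - a * x ^ (n + 1) := by ring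
  have hpeel := tprod_eq_zero_mul' (f := fun n : ℕ => 1 - a * x ^ n)
    ((multipliable_one_sub_mul_pow (a * x) hx).congr hshift)
  rwa [pow_zero, mul_one, ← tprod_congr hshift] at hpeel

lemma qPoch_mul_qPoch_neg (a : ℂ) (hx : ‖x‖ < 1) :
    qPoch a x * qPoch (-a) x = qPoch (a ^ 2) (x ^ 2) := by
  rw [qPoch, qPoch, qPoch, ← (multipliable_one_sub_mul_pow a hx).tprod_mul
    (multipliable_one_sub_mul_pow (-a) hx)]
  exact tprod_congr fun n => by ring

end QPoch

section TripleProduct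

variable {x : ℂ}

lemma tendsto_qBinom_add (hx : ‖x‖ < 1) :
    Tendsto (fun p : ℕ × ℕ => qBinom x (p.1 + p.2) p.2) (atTop ×ˢ atTop) (𝓝 (qPoch x x)⁻¹) := by
  have hP := qPoch_ne_zero hx hx
  have hlim := tendsto_qPochFin x hx
  have hsum : Tendsto (fun p : ℕ × ℕ => p.1 + p.2) (atTop ×ˢ atTop) atTop :=
    tendsto_fst.atTop_add_atTop tendsto_snd
  have := (hlim.comp hsum).div ((hlim.comp tendsto_fst).mul (hlim.comp tendsto_snd))
    (mul_ne_zero hP hP)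
  rw [div_mul_cancel_left₀ hP] at this
  exact this.congr fun p => (qBinom_add_eq_div hx p.1 p.2).symm

lemma exists_norm_qBinom_le (hx : ‖x‖ < 1) : ∃ C, ∀ n k, ‖qBinom x n k‖ ≤ C := by
  have hlim := tendsto_qPochFin x hx
  obtain ⟨A, hA⟩ := (Metric.isBounded_range_of_tendsto _ hlim).exists_norm_le
  obtain ⟨B, hB⟩ := (Metric.isBounded_range_of_tendsto _
    (hlim.inv₀ (qPoch_ne_zero hx hx))).exists_norm_le
  rw [Set.forall_mem_range] at hA hB
  have hA₀ : 0 ≤ A := (norm_nonneg _).trans (hA 0)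
  have hB₀ : 0 ≤ B := (norm_nonneg _).trans (hB 0)
  refine ⟨A * (B * B), fun n k => ?_⟩
  rcases lt_or_ge n k with hnk | hkn
  · rw [qBinom_eq_zero_of_lt x hnk, norm_zero]
    positivity
  · obtain ⟨m, rfl⟩ := Nat.exists_eq_add_of_le' hkn
    rw [qBinom_add_eq_div hx, div_eq_mul_inv, mul_inv, norm_mul, norm_mul]
    gcongr
    exacts [hA _, hB _, hB _]

lemma tendsto_qBinom_two_mul (hx : ‖x‖ < 1) (k : ℤ) :
    Tendsto (fun n : ℕ => qBinom x (2 * n) (n + k).toNat) atTop (𝓝 (qPoch x x)⁻¹) := by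
  have htoNat (l : ℤ) : Tendsto (fun n : ℕ => ((n : ℤ) + l).toNat) atTop atTop :=
    tendsto_atTop.mpr fun b => by
      filter_upwards [eventually_ge_atTop (b + l.natAbs)] with n hn
      lia
  refine ((tendsto_qBinom_add hx).comp ((htoNat (-k)).prodMk (htoNat k))).congr' ?_
  filter_upwards [eventually_ge_atTop k.natAbs] with n hn
  simp only [Function.comp_apply]
  congr 1
  lia

theorem hasSum_jacobi_triple_product (hx₀ : x ≠ 0) (hx : ‖x‖ < 1) {z : ℂ} (hz : z ≠ 0) :
    HasSum (fun k : ℤ => x ^ (k * (k + 1) / 2) * z ^ k)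
      (qPoch x x * (qPoch (-(z * x)) x * qPoch (-z⁻¹) x)) := by
  set term : ℤ → ℂ := fun k => x ^ (k * (k + 1) / 2) * z ^ k
  obtain ⟨C, hC⟩ := exists_norm_qBinom_le hx
  let partialTerm (n : ℕ) : ℤ → ℂ :=
    (Icc (-n : ℤ) n : Set ℤ).indicator fun k => qBinom x (2 * n) (n + k).toNat * term k
  have hprod : Tendsto (fun n => ∑' k, partialTerm n k) atTop
      (𝓝 (qPoch (-(z * x)) x * qPoch (-z⁻¹) x)) :=
    ((tendsto_qPochFin _ hx).mul (tendsto_qPochFin _ hx)).congr fun n => by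
      rw [qPochFin_mul_qPochFin_eq_sum_qBinom hx₀ hz, sum_eq_tsum_indicator]
  have hterm (k : ℤ) :
      Tendsto (partialTerm · k) atTop (𝓝 ((qPoch x x)⁻¹ * term k)) := by
    refine ((tendsto_qBinom_two_mul hx k).mul_const (term k)).congr' ?_
    filter_upwards [eventually_ge_atTop k.natAbs] with n hn
    have hk : k ∈ Icc (-n : ℤ) n := mem_Icc.mpr (by lia)
    simp only [partialTerm, Set.indicator_of_mem (mem_coe.mpr hk)]
  have hbound (n : ℕ) (k : ℤ) : ‖partialTerm n k‖ ≤ C * ‖term k‖ :=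
    (norm_indicator_le_norm_self _ _).trans <| by
      rw [norm_mul]
      gcongr
      exact hC _ _
  have hsummable : Summable fun k => ‖term k‖ := by
    simpa [term] using summable_zpow_triangular_mul_zpow (x := ‖x‖) (by simpa using hx) ‖z‖
  have hsum : Tendsto (fun n => ∑' k, partialTerm n k) atTop
      (𝓝 (∑' k, (qPoch x x)⁻¹ * term k)) :=
    tendsto_tsum_of_dominated_convergence (hsummable.mul_left C) hterm (.of_forall hbound)
  have hlim := tendsto_nhds_unique hprod hsum
  rw [tsum_mul_left] at hlim
  rw [hlim, mul_inv_cancel_left₀ (qPoch_ne_zero hx hx)]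
  exact hsummable.of_norm.hasSum

theorem tsum_zpow_triangular (hx₀ : x ≠ 0) (hx : ‖x‖ < 1) :
    ∑' k : ℤ, x ^ (k * (k + 1) / 2) = 2 * qPoch (x ^ 2) (x ^ 2) ^ 2 / qPoch x x := by
  have hsum := (hasSum_jacobi_triple_product hx₀ hx one_ne_zero).tsum_eq
  have hneg_one : qPoch (-1) x = 2 * qPoch (-x) x := by
    rw [qPoch_eq_one_sub_mul (-1) hx, neg_one_mul]
    norm_num
  simp only [one_zpow, mul_one, one_mul, inv_one, hneg_one] at hsum
  rw [hsum, ← qPoch_mul_qPoch_neg x hx, eq_div_iff (qPoch_ne_zero hx hx)]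
  ring

end TripleProduct

lemma thetaC_one_one_eq_tsum (τ : ℂ) :
    thetaC 1 1 τ = exp (2 * Real.pi * I * τ * (1 / 4)) *
      ∑' k : ℤ, (exp (2 * Real.pi * I * τ) ^ 2) ^ (k * (k + 1) / 2) := by
  rw [thetaC, thetaMA, ← tsum_mul_left]
  refine tsum_congr fun k => ?_
  have htri : (2 * (k * (k + 1) / 2 : ℤ) : ℂ) = k * (k + 1) := by
    exact_mod_cast Int.two_mul_ediv_two_of_even (Int.even_mul_succ_self k)
  rw [← exp_nat_mul, ← exp_int_mul, ← exp_add]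
  congr 1
  push_cast
  linear_combination -(2 * Real.pi * I * τ) * htri

/-- Product formula for `θ_{1,1}`. -/
theorem theta11_product (τ : ℂ) (hτ : 0 < τ.im)
    (q : ℂ) (hq : q = Complex.exp (2 * (Real.pi : ℂ) * I * τ)) :
    thetaC 1 1 τ = 2 * Complex.exp (2 * (Real.pi : ℂ) * I * τ * (1/4)) *
      qPoch (q ^ 4) (q ^ 4) ^ 2 / qPoch (q ^ 2) (q ^ 2) := by
  have hq₀ : q ≠ 0 := hq ▸ exp_ne_zero _
  have hq₁ : ‖q‖ < 1 := hq ▸ UpperHalfPlane.norm_exp_two_pi_I_lt_one ⟨τ, hτ⟩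
  have hq₂ : ‖q ^ 2‖ < 1 := norm_pow q 2 ▸ pow_lt_one₀ (norm_nonneg q) hq₁ two_ne_zero
  rw [thetaC_one_one_eq_tsum, ← hq, tsum_zpow_triangular (pow_ne_zero 2 hq₀) hq₂, ← pow_mul]
  ring
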